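/- arXiv:2412.15368 — 2 statements merged into one kernel-verified Lean document; each statement's English description precedes it below -/
import Mathlib

section
/- Let k be a field, A = k[a_1,a_2], p ≥ 3 an integer, and I = (a_1^p, a_2^p, a_1 a_2^{p-1}). Then SD(I) = {1, 2, …, p}, so st(I) = rt(I) = p. Concretely, for every n with 2 ≤ n ≤ p one has L_n ≠ V_1·L_{n-1}, and L_n = V_1·L_{n-1} for every n ≥ p+1. -/
/-- The `A`-submodule of homogeneous elements of degree `n` in the kernel `L` of the
presentation `φ : A[X_1,…,X_r] → A[t]`, `X_i ↦ x_i t`, of the Rees algebra of the ideal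
`I = (x_1,…,x_r)`; i.e. the degree-`n` equations `L_n` of the Rees algebra. -/
noncomputable def reesRel {A : Type*} [CommRing A] {r : ℕ} (x : Fin r → A) (n : ℕ) :
    Submodule A (MvPolynomial (Fin r) A) :=
  (RingHom.ker (MvPolynomial.aeval (fun i => Polynomial.C (x i) * Polynomial.X) :
      MvPolynomial (Fin r) A →ₐ[A] Polynomial A)).restrictScalars A
  ⊓ MvPolynomial.homogeneousSubmodule (Fin r) A n

/-- `E(I)_n = 0`, i.e. `L_n = V_1·L_{n-1}`: the degree-`n` equations of the Rees algebra
are generated by those of degree `n-1`. -/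
def reesRelStable {A : Type*} [CommRing A] {r : ℕ} (x : Fin r → A) (n : ℕ) : Prop :=
  reesRel x n = MvPolynomial.homogeneousSubmodule (Fin r) A 1 * reesRel x (n - 1)

/-- The set `SD(I) = {1} ∪ {n ≥ 2 : L_n ≠ V_1·L_{n-1}}` of sifted degrees. -/
def siftedDegrees {A : Type*} [CommRing A] {r : ℕ} (x : Fin r → A) : Set ℕ :=
  {1} ∪ {n : ℕ | 2 ≤ n ∧ ¬ reesRelStable x n}

/-- The sifted type `st(I) = card SD(I)`. -/
noncomputable def siftedType {A : Type*} [CommRing A] {r : ℕ} (x : Fin r → A) : ℕ :=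
  (siftedDegrees x).ncard

/-- The relation type `rt(I)`: the least `s ≥ 1` with `L_n = V_1·L_{n-1}` for all
`n ≥ s+1`. -/
noncomputable def relType {A : Type*} [CommRing A] {r : ℕ} (x : Fin r → A) : ℕ :=
  sInf {s : ℕ | 1 ≤ s ∧ ∀ n, s + 1 ≤ n → reesRelStable x n}

/-!
For a monomial ideal, `L_n` is spanned over `k` by the binomials `a^e X^d - a^{e'} X^{d'}` whose two
terms lie in the same fibre: they have degree `n` in `X` and become equal when each `X_i` is
replaced by `x_i`. The subspace `V_1·L_{n-1}` is spanned by those binomials whose two terms have a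
variable `X_i` in common. Hence `L_n = V_1·L_{n-1}` if and only if every fibre in degree `n` is
connected for the relation of sharing a variable.

Let the ideal be `(a₁^p, a₂^p, a₁a₂^{p-1})`, with variables `X_0, X_1, X_2`. When `n ≤ p`, the
monomial `a₁^{p-n} X_2^n` is isolated in its fibre, which also contains
`a₂^{p-n} X_0 X_1^{n-1}`. When `n > p`, only the pure powers of a variable could be isolated. A
factor of `X_0^n` or of `X_1^n` can be exchanged for any variable occurring elsewhere in the fibre,
and the equation `X_2^p = X_0 X_1^{p-1}` links `X_2^n` to `X_0 X_1^{p-1} X_2^{n-p}`.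
-/

section DifferenceSpan

variable {k ι κ V W : Type*} [CommRing k] [AddCommGroup V] [Module k V]
  [AddCommGroup W] [Module k W]

/-- The `k`-span of the differences `b i - b j` with `R i j`. When `b` consists of monomials these
are pure binomials. -/
def differenceSpan (k : Type*) [CommRing k] [Module k V] (b : ι → V) (R : ι → ι → Prop) :
    Submodule k V :=
  Submodule.span k {v | ∃ i j, R i j ∧ b i - b j = v}

theorem sub_mem_differenceSpan {b : ι → V} {R : ι → ι → Prop} {i j : ι} (hij : R i j) :
    b i - b j ∈ differenceSpan k b R :=
  Submodule.subset_span ⟨i, j, hij, rfl⟩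

theorem differenceSpan_le_iff {b : ι → V} {R : ι → ι → Prop} {M : Submodule k V} :
    differenceSpan k b R ≤ M ↔ ∀ i j, R i j → b i - b j ∈ M := by
  refine Submodule.span_le.trans ⟨fun h i j hij => h ⟨i, j, hij, rfl⟩, ?_⟩
  rintro h _ ⟨i, j, hij, rfl⟩
  exact h i j hij

theorem sub_mem_differenceSpan_iff_eqvGen [Nontrivial k] (b : Module.Basis ι k V)
    {R : ι → ι → Prop} {i j : ι} :
    b i - b j ∈ differenceSpan k b R ↔ Relation.EqvGen R i j := by
  constructor
  · intro h
    let T : V →ₗ[k] Quot R →₀ k := b.constr k fun i => Finsupp.single (Quot.mk R i) 1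
    have hT (i : ι) : T (b i) = Finsupp.single (Quot.mk R i) 1 := b.constr_basis k _ i
    have hker : differenceSpan k b R ≤ LinearMap.ker T :=
      differenceSpan_le_iff.2 fun i j hij => by
        rw [LinearMap.mem_ker, map_sub, hT, hT, Quot.sound hij, sub_self]
    have hij : T (b i) = T (b j) := sub_eq_zero.1 ((map_sub T _ _).symm.trans (hker h))
    rw [hT, hT] at hij
    exact Quot.eqvGen_exact (Finsupp.single_left_injective one_ne_zero hij)
  · intro h
    induction h with
    | rel i j hij => exact sub_mem_differenceSpan hij
    | refl i => rw [sub_self]; exact zero_mem _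
    | symm i j _ ih => rw [← neg_sub]; exact neg_mem ih
    | trans i j l _ _ hij hjl => rw [← sub_add_sub_cancel _ (b j)]; exact add_mem hij hjl

theorem differenceSpan_le_differenceSpan_iff [Nontrivial k] (b : Module.Basis ι k V)
    {R S : ι → ι → Prop} :
    differenceSpan k b R ≤ differenceSpan k b S ↔ ∀ i j, R i j → Relation.EqvGen S i j := by
  simp only [differenceSpan_le_iff, sub_mem_differenceSpan_iff_eqvGen]

theorem span_image_inf_ker_eq_differenceSpan {b : ι → V} {c : κ → W}
    (hc : LinearIndependent k c) {g : ι → κ} {T : V →ₗ[k] W} (hT : ∀ i, T (b i) = c (g i))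
    (s : Set ι) :
    Submodule.span k (b '' s) ⊓ LinearMap.ker T =
      differenceSpan k b fun i j => i ∈ s ∧ j ∈ s ∧ g i = g j := by
  refine le_antisymm ?_ (differenceSpan_le_iff.2 fun i j ⟨hi, hj, hij⟩ => ⟨?_, ?_⟩)
  · rintro f ⟨hfs, hfT⟩
    obtain ⟨l, hl, rfl⟩ := (Finsupp.mem_span_image_iff_linearCombination k).1 hfs
    have hg : Finsupp.mapDomain g l = 0 := by
      refine linearIndependent_iff.1 hc _ ?_
      rw [Finsupp.linearCombination_mapDomain, ← hfT, Finsupp.apply_linearCombination]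
      exact congrArg (Finsupp.linearCombination k · l) (funext hT).symm
    -- Modulo the differences, `b i` depends only on `g i`.
    set D := differenceSpan k b fun i j => i ∈ s ∧ j ∈ s ∧ g i = g j
    let h : κ → V ⧸ D := Function.extend (fun i : s => g i) (fun i => D.mkQ (b i)) 0
    have hh : ∀ i ∈ s, D.mkQ (b i) = h (g i) := by
      have hfac : (fun i : s => D.mkQ (b i)).FactorsThrough fun i => g i := fun i j hij =>
        (Submodule.Quotient.eq D).2 (sub_mem_differenceSpan ⟨i.2, j.2, hij⟩)
      exact fun i hi => (hfac.extend_apply 0 ⟨i, hi⟩).symm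
    refine (Submodule.Quotient.mk_eq_zero D).1 ?_
    calc D.mkQ (Finsupp.linearCombination k b l)
        = Finsupp.linearCombination k (h ∘ g) l := by
          rw [Finsupp.apply_linearCombination]
          exact Finsupp.sum_congr fun i hi => congrArg (l i • ·) (hh i (hl hi))
      _ = Finsupp.linearCombination k h (Finsupp.mapDomain g l) :=
          (Finsupp.linearCombination_mapDomain k g l).symm
      _ = 0 := by rw [hg, map_zero]
  · exact sub_mem (Submodule.subset_span ⟨i, hi, rfl⟩) (Submodule.subset_span ⟨j, hj, rfl⟩)
  · change T _ = 0
    rw [map_sub, hT, hT, hij, sub_self]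

end DifferenceSpan

section ReesEquations

open MvPolynomial

variable {A σ : Type*} [CommRing A] {r : ℕ}

theorem aeval_C_mul_X_of_isHomogeneous (x : σ → A) {n : ℕ} {f : MvPolynomial σ A}
    (hf : f.IsHomogeneous n) :
    aeval (fun i => Polynomial.C (x i) * Polynomial.X) f =
      Polynomial.monomial n (aeval x f) := by
  rw [f.as_sum]
  simp only [map_sum]
  refine Finset.sum_congr rfl fun d hd => ?_
  have hdn : d.degree = n := by
    rw [Finsupp.degree_eq_weight_one]
    exact hf (mem_support_iff.1 hd)
  rw [aeval_monomial, aeval_monomial, ← hdn, Finsupp.degree_apply,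
    ← Polynomial.C_mul_X_pow_eq_monomial]
  simp only [Finsupp.prod, mul_pow, Finset.prod_mul_distrib, Finset.prod_pow_eq_pow_sum, map_mul,
    map_prod, map_pow, Polynomial.algebraMap_eq, Algebra.algebraMap_self, RingHom.id_apply,
    mul_assoc]

theorem mem_reesRel_iff {x : Fin r → A} {n : ℕ} {f : MvPolynomial (Fin r) A} :
    f ∈ reesRel x n ↔ f.IsHomogeneous n ∧ aeval x f = 0 := by
  refine and_comm.trans (and_congr_right fun hf => ?_)
  change aeval _ f = 0 ↔ _
  rw [aeval_C_mul_X_of_isHomogeneous x hf, Polynomial.monomial_eq_zero_iff]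

theorem mem_of_mem_homogeneousSubmodule_one_mul {N : Submodule A (MvPolynomial σ A)}
    {D : AddSubgroup (MvPolynomial σ A)} (hX : ∀ i, ∀ g ∈ N, X i * g ∈ D)
    {f : MvPolynomial σ A} (hf : f ∈ homogeneousSubmodule σ A 1 * N) : f ∈ D := by
  rw [homogeneousSubmodule_one_eq_span_X] at hf
  refine Submodule.mul_induction_on hf (fun l hl g hg => ?_) fun _ _ => add_mem
  induction hl using Submodule.span_induction generalizing g with
  | mem _ hl => obtain ⟨i, rfl⟩ := hl; exact hX i g hg
  | zero => rw [zero_mul]; exact zero_mem D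
  | add _ _ _ _ ih ih' => rw [add_mul]; exact add_mem (ih g hg) (ih' g hg)
  | smul a _ _ ih => rw [smul_mul_assoc, ← mul_smul_comm]; exact ih _ (N.smul_mem a hg)

theorem siftedDegrees_eq_Icc {x : Fin r → A} {p : ℕ} (hp : 1 ≤ p)
    (hns : ∀ n, 2 ≤ n → n ≤ p → ¬ reesRelStable x n) (hs : ∀ n, p + 1 ≤ n → reesRelStable x n) :
    siftedDegrees x = Set.Icc 1 p := by
  ext n
  constructor
  · rintro (rfl | ⟨hn, hn'⟩)
    · exact ⟨le_rfl, hp⟩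
    · exact ⟨by omega, not_lt.1 fun hlt => hn' (hs n hlt)⟩
  · rintro ⟨hn, hnp⟩
    rcases hn.eq_or_lt with rfl | hn
    · exact Or.inl rfl
    · exact Or.inr ⟨hn, hns n hn hnp⟩

theorem relType_eq {x : Fin r → A} {p : ℕ} (hp : 1 ≤ p)
    (hns : ∀ n, 2 ≤ n → n ≤ p → ¬ reesRelStable x n) (hs : ∀ n, p + 1 ≤ n → reesRelStable x n) :
    relType x = p := by
  refine IsLeast.csInf_eq ⟨⟨hp, hs⟩, fun s ⟨hs₁, hs'⟩ => ?_⟩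
  by_contra! hsp
  exact hns p (by omega) le_rfl (hs' p hsp)

end ReesEquations

section Fibre

open Finsupp (single linearCombination)
open Relation (EqvGen)

variable {σ τ : Type*}

theorem eq_of_eqvGen_of_isolated {α : Type*} {R : α → α → Prop} {x y : α}
    (hx : ∀ z w, R z w → (z = x ↔ w = x)) (h : EqvGen R x y) : y = x :=
  (Setoid.eqvGen_le (s := Setoid.ker (· = x)) (fun z w hzw => propext (hx z w hzw)) h).mp rfl

/-- The exponent of the image of the monomial `a^e X^d`, encoded as the pair `(e, d)`, under the
substitution of `a^(m i)` for `X i`. -/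
noncomputable def multidegree (m : σ → τ →₀ ℕ) (a : (τ →₀ ℕ) × (σ →₀ ℕ)) : τ →₀ ℕ :=
  a.1 + linearCombination ℕ m a.2

/-- Two monomials `a^e X^d` lie in the same fibre in degree `n` if both have degree `n` in the
variables `X` and their multidegrees agree. -/
def SameFibre (m : σ → τ →₀ ℕ) (n : ℕ) (a b : (τ →₀ ℕ) × (σ →₀ ℕ)) : Prop :=
  a.2.degree = n ∧ b.2.degree = n ∧ multidegree m a = multidegree m b

/-- Two monomials in the same fibre are linked if they are divisible by a common variable `X i`;
the difference of two such monomials is `X i` times an equation of lower degree. -/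
def Linked (m : σ → τ →₀ ℕ) (n : ℕ) (a b : (τ →₀ ℕ) × (σ →₀ ℕ)) : Prop :=
  SameFibre m n a b ∧ ∃ i, a.2 i ≠ 0 ∧ b.2 i ≠ 0

variable {m : σ → τ →₀ ℕ} {n : ℕ} {a b : (τ →₀ ℕ) × (σ →₀ ℕ)}

theorem SameFibre.symm (h : SameFibre m n a b) : SameFibre m n b a :=
  ⟨h.2.1, h.1, h.2.2.symm⟩

theorem Linked.symm (h : Linked m n a b) : Linked m n b a :=
  ⟨h.1.symm, h.2.imp fun _ => And.symm⟩

theorem sameFibre_add_single_iff {e e' : τ →₀ ℕ} {d d' : σ →₀ ℕ} (i : σ) :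
    SameFibre m (n + 1) (e, d + single i 1) (e', d' + single i 1) ↔
      SameFibre m n (e, d) (e', d') := by
  simp [SameFibre, multidegree, ← add_assoc]

theorem Linked.exists_eq_add_single (h : Linked m (n + 1) a b) :
    ∃ i d d', SameFibre m n (a.1, d) (b.1, d') ∧
      a = (a.1, d + single i 1) ∧ b = (b.1, d' + single i 1) := by
  obtain ⟨hab, i, hai, hbi⟩ := h
  have hsub {d : σ →₀ ℕ} (hd : d i ≠ 0) : d - single i 1 + single i 1 = d :=
    tsub_add_cancel_of_le (Finsupp.single_le_iff.2 (Nat.one_le_iff_ne_zero.2 hd))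
  refine ⟨i, a.2 - single i 1, b.2 - single i 1, (sameFibre_add_single_iff i).1 ?_, ?_, ?_⟩
  · rwa [hsub hai, hsub hbi]
  · rw [hsub hai]
  · rw [hsub hbi]

theorem le_linearCombination_of_ne_zero {d : σ →₀ ℕ} {i : σ} (hi : d i ≠ 0) :
    m i ≤ linearCombination ℕ m d := by
  rw [← tsub_add_cancel_of_le (Finsupp.single_le_iff.2 (Nat.one_le_iff_ne_zero.2 hi)), map_add,
    Finsupp.linearCombination_single, one_smul]
  exact le_add_self

theorem eqvGen_linked_of_linearCombination_le (hab : SameFibre m n a b) {d : σ →₀ ℕ}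
    (hd : d.degree = n) (hle : linearCombination ℕ m d ≤ multidegree m a) {i j : σ}
    (hai : a.2 i ≠ 0) (hdi : d i ≠ 0) (hdj : d j ≠ 0) (hbj : b.2 j ≠ 0) :
    EqvGen (Linked m n) a b := by
  obtain ⟨e, he⟩ := exists_add_of_le hle
  have hc : multidegree m (e, d) = multidegree m a := by rw [multidegree, he, add_comm]
  exact .trans a (e, d) b (.rel _ _ ⟨⟨hab.1, hd, hc.symm⟩, i, hai, hdi⟩)
    (.rel _ _ ⟨⟨hd, hab.2.1, hc.trans hab.2.2⟩, j, hdj, hbj⟩)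

-- One factor `X i` of `X i ^ n` can be exchanged for any variable dividing the other monomial.
theorem eqvGen_linked_of_eq_single {i : σ} {t : τ} {c : ℕ} (hi : m i = single t c)
    (hmax : ∀ j, m j t ≤ c) (hn : 2 ≤ n) (hab : SameFibre m n a b) (ha : a.2 = single i n) :
    EqvGen (Linked m n) a b := by
  obtain ⟨j, hj⟩ : ∃ j, b.2 j ≠ 0 := by
    by_contra! h
    have hb : b.2 = 0 := Finsupp.ext h
    have := hab.2.1
    rw [hb, map_zero] at this
    omega
  have hle : linearCombination ℕ m (single i (n - 1) + single j 1) ≤ multidegree m a := by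
    intro s
    rw [map_add, Finsupp.linearCombination_single, Finsupp.linearCombination_single, one_smul]
    by_cases hs : s = t
    · subst hs
      calc ((n - 1) • m i + m j) s ≤ (n - 1) * c + c := by
            simpa [hi] using hmax j
        _ = n * c := by rw [← Nat.succ_mul, Nat.succ_eq_add_one, Nat.sub_add_cancel (by omega)]
        _ ≤ multidegree m a s := by simp [multidegree, ha, hi]
    · calc ((n - 1) • m i + m j) s = m j s := by simp [hi, Finsupp.single_eq_of_ne hs]
        _ ≤ linearCombination ℕ m b.2 s := le_linearCombination_of_ne_zero hj s
        _ ≤ multidegree m a s := by rw [hab.2.2]; simp [multidegree]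
  refine eqvGen_linked_of_linearCombination_le hab (i := i) (j := j) ?_ hle ?_ ?_ ?_ hj
  · rw [map_add, Finsupp.degree_single, Finsupp.degree_single]; omega
  · rw [ha, Finsupp.single_eq_same]; omega
  · rw [Finsupp.add_apply, Finsupp.single_eq_same]; omega
  · rw [Finsupp.add_apply, Finsupp.single_eq_same]; omega

end Fibre

section MonomialIdeal

open MvPolynomial
open Relation (EqvGen)

variable {k σ τ : Type*} [CommRing k]

/-- The `k`-basis of `k[a][X]` formed by the monomials `a^e X^d`, indexed by the pairs `(e, d)`. -/
noncomputable def bimonomialBasis (k σ τ : Type*) [CommRing k] :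
    Module.Basis ((τ →₀ ℕ) × (σ →₀ ℕ)) k (MvPolynomial σ (MvPolynomial τ k)) :=
  (basisMonomials τ k).smulTower (basisMonomials σ (MvPolynomial τ k))

theorem bimonomialBasis_apply (a : (τ →₀ ℕ) × (σ →₀ ℕ)) :
    bimonomialBasis k σ τ a = monomial a.2 (monomial a.1 1) := by
  rw [bimonomialBasis, Module.Basis.smulTower_apply, coe_basisMonomials, coe_basisMonomials,
    smul_monomial, smul_eq_mul, mul_one]

theorem bimonomialBasis_repr (f : MvPolynomial σ (MvPolynomial τ k))
    (a : (τ →₀ ℕ) × (σ →₀ ℕ)) :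
    (bimonomialBasis k σ τ).repr f a = (f.coeff a.2).coeff a.1 := by
  rw [bimonomialBasis, Module.Basis.smulTower_repr]
  rfl

theorem X_mul_bimonomialBasis (i : σ) (e : τ →₀ ℕ) (d : σ →₀ ℕ) :
    X i * bimonomialBasis k σ τ (e, d) = bimonomialBasis k σ τ (e, d + Finsupp.single i 1) := by
  rw [bimonomialBasis_apply, bimonomialBasis_apply, X, monomial_mul, one_mul, add_comm]

theorem aeval_bimonomialBasis (m : σ → τ →₀ ℕ) (a : (τ →₀ ℕ) × (σ →₀ ℕ)) :
    aeval (fun i => monomial (m i) (1 : k)) (bimonomialBasis k σ τ a) =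
      monomial (multidegree m a) 1 := by
  rw [bimonomialBasis_apply, aeval_monomial, multidegree, Finsupp.linearCombination_apply]
  simp only [monomial_pow, one_pow, Finsupp.prod, Finsupp.sum, Algebra.algebraMap_self,
    RingHom.id_apply]
  rw [← monomial_sum_one, monomial_mul, one_mul]

theorem restrictScalars_homogeneousSubmodule (n : ℕ) :
    (homogeneousSubmodule σ (MvPolynomial τ k) n).restrictScalars k =
      Submodule.span k (bimonomialBasis k σ τ '' {a | a.2.degree = n}) := by
  refine le_antisymm (fun f hf => ?_) (Submodule.span_le.2 ?_)
  · refine (bimonomialBasis k σ τ).mem_span_image.2 fun a ha => ?_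
    rw [Finset.mem_coe, Finsupp.mem_support_iff, bimonomialBasis_repr] at ha
    rw [Set.mem_ofPred_eq, Finsupp.degree_eq_weight_one]
    exact hf fun h => ha (by rw [h, coeff_zero])
  · rintro _ ⟨a, ha, rfl⟩
    rw [bimonomialBasis_apply]
    exact isHomogeneous_monomial _ ha

variable {r : ℕ} (m : Fin r → τ →₀ ℕ) (n : ℕ)

theorem restrictScalars_reesRel_monomial :
    (reesRel (fun i => monomial (m i) (1 : k)) n).restrictScalars k =
      differenceSpan k (bimonomialBasis k (Fin r) τ) (SameFibre m n) := by
  let T : MvPolynomial (Fin r) (MvPolynomial τ k) →ₗ[k] MvPolynomial τ k :=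
    (aeval fun i => monomial (m i) (1 : k)).toLinearMap.restrictScalars k
  have hT (a) : T (bimonomialBasis k (Fin r) τ a) = basisMonomials τ k (multidegree m a) := by
    rw [coe_basisMonomials]
    exact aeval_bimonomialBasis m a
  calc (reesRel (fun i => monomial (m i) (1 : k)) n).restrictScalars k
      = (homogeneousSubmodule (Fin r) (MvPolynomial τ k) n).restrictScalars k ⊓
          LinearMap.ker T := Submodule.ext fun _ => mem_reesRel_iff
    _ = differenceSpan k (bimonomialBasis k (Fin r) τ) (SameFibre m n) := by
      rw [restrictScalars_homogeneousSubmodule]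
      exact span_image_inf_ker_eq_differenceSpan (basisMonomials τ k).linearIndependent hT _

theorem restrictScalars_homogeneousSubmodule_one_mul_reesRel_monomial :
    (homogeneousSubmodule (Fin r) (MvPolynomial τ k) 1 *
        reesRel (fun i => monomial (m i) (1 : k)) n).restrictScalars k =
      differenceSpan k (bimonomialBasis k (Fin r) τ) (Linked m (n + 1)) := by
  have hL (g) : g ∈ reesRel (fun i => monomial (m i) (1 : k)) n ↔
      g ∈ differenceSpan k (bimonomialBasis k (Fin r) τ) (SameFibre m n) := by
    rw [← restrictScalars_reesRel_monomial, Submodule.restrictScalars_mem]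
  set D := differenceSpan k (bimonomialBasis k (Fin r) τ) (Linked m (n + 1))
  refine le_antisymm (fun f hf => ?_) (differenceSpan_le_iff.2 fun a b hab => ?_)
  · refine mem_of_mem_homogeneousSubmodule_one_mul (D := D.toAddSubgroup) (fun i g hg => ?_) hf
    have hle : differenceSpan k (bimonomialBasis k (Fin r) τ) (SameFibre m n) ≤
        D.comap (LinearMap.mulLeft k (X i)) := by
      refine differenceSpan_le_iff.2 fun a b hab => ?_
      rw [Submodule.mem_comap, LinearMap.mulLeft_apply, mul_sub, X_mul_bimonomialBasis,
        X_mul_bimonomialBasis]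
      exact sub_mem_differenceSpan
        ⟨(sameFibre_add_single_iff i).2 hab, i, by simp, by simp⟩
    exact hle ((hL g).1 hg)
  · obtain ⟨i, d, d', hdd', ha, hb⟩ := hab.exists_eq_add_single
    rw [ha, hb, ← X_mul_bimonomialBasis, ← X_mul_bimonomialBasis, ← mul_sub,
      Submodule.restrictScalars_mem]
    exact Submodule.mul_mem_mul (isHomogeneous_X _ i) ((hL _).2 (sub_mem_differenceSpan hdd'))

theorem reesRelStable_monomial_iff [Nontrivial k] :
    reesRelStable (fun i => monomial (m i) (1 : k)) (n + 1) ↔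
      ∀ a b, SameFibre m (n + 1) a b → EqvGen (Linked m (n + 1)) a b := by
  rw [reesRelStable, Nat.add_sub_cancel,
    ← (Submodule.restrictScalars_injective k (MvPolynomial τ k) _).eq_iff,
    restrictScalars_reesRel_monomial, restrictScalars_homogeneousSubmodule_one_mul_reesRel_monomial,
    ← differenceSpan_le_differenceSpan_iff (k := k) (bimonomialBasis k (Fin r) τ)]
  exact ⟨le_of_eq, fun h => h.antisymm <|
    differenceSpan_le_iff.2 fun _ _ hab => sub_mem_differenceSpan hab.1⟩

end MonomialIdeal

section TwoVariables

open MvPolynomial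
open Finsupp (single linearCombination)
open Relation (EqvGen)

/-- The exponents of the generators `a₁^p`, `a₂^p`, `a₁a₂^{p-1}`. -/
noncomputable def generatorExponents (p : ℕ) : Fin 3 → Fin 2 →₀ ℕ :=
  ![single 0 p, single 1 p, single 0 1 + single 1 (p - 1)]

variable {p n : ℕ} {a b : (Fin 2 →₀ ℕ) × (Fin 3 →₀ ℕ)}

theorem monomial_generatorExponents (k : Type*) [CommRing k] (p : ℕ) :
    (fun i => monomial (generatorExponents p i) (1 : k)) =
      ![X 0 ^ p, X 1 ^ p, X 0 * X 1 ^ (p - 1)] := by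
  funext i
  fin_cases i
  · exact X_pow_eq_monomial.symm
  · exact X_pow_eq_monomial.symm
  · change monomial (single 0 1 + single 1 (p - 1)) (1 : k) = X 0 * X 1 ^ (p - 1)
    rw [X_pow_eq_monomial, X, monomial_mul, one_mul]

theorem linearCombination_generatorExponents (p : ℕ) (d : Fin 3 →₀ ℕ) :
    linearCombination ℕ (generatorExponents p) d =
      single 0 (p * d 0 + d 2) + single 1 (p * d 1 + (p - 1) * d 2) := by
  rw [Finsupp.linearCombination_apply,
    Finsupp.sum_fintype d _ fun i => zero_smul ℕ (generatorExponents p i),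
    Fin.sum_univ_three]
  ext s
  fin_cases s <;> simp [generatorExponents, -Finsupp.single_tsub, mul_comm]

theorem sameFibre_generatorExponents_iff :
    SameFibre (generatorExponents p) n a b ↔
      a.2 0 + a.2 1 + a.2 2 = n ∧ b.2 0 + b.2 1 + b.2 2 = n ∧
      a.1 0 + (p * a.2 0 + a.2 2) = b.1 0 + (p * b.2 0 + b.2 2) ∧
      a.1 1 + (p * a.2 1 + (p - 1) * a.2 2) = b.1 1 + (p * b.2 1 + (p - 1) * b.2 2) := by
  simp [SameFibre, Finsupp.degree_eq_sum, Fin.sum_univ_three, Finsupp.ext_iff,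
    Fin.forall_fin_two, multidegree, linearCombination_generatorExponents]

theorem exists_eq_single_of_disjoint {d d' : Fin 3 →₀ ℕ} (h : Disjoint d.support d'.support) :
    ∃ i, d = single i d.degree ∨ d' = single i d'.degree := by
  have hpure {e : Fin 3 →₀ ℕ} (he : e.support.card ≤ 1) : ∃ i, e = single i e.degree := by
    obtain ⟨i, c, rfl⟩ := Finsupp.card_support_le_one'.1 he
    exact ⟨i, by rw [Finsupp.degree_single]⟩
  have hcard : d.support.card + d'.support.card ≤ 3 := by
    rw [← Finset.card_union_of_disjoint h]
    exact Finset.card_le_univ _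
  rcases le_or_gt d.support.card 1 with hd | hd
  · exact (hpure hd).imp fun _ => Or.inl
  · exact (hpure (by omega)).imp fun _ => Or.inr

theorem eqvGen_linked_of_eq_single_two (hp : 1 ≤ p) (hn : p < n)
    (hab : SameFibre (generatorExponents p) n a b) (ha : a.2 = single 2 n) (hb : b.2 0 ≠ 0) :
    EqvGen (Linked (generatorExponents p) n) a b := by
  have hle : linearCombination ℕ (generatorExponents p)
      (single 0 1 + single 1 (p - 1) + single 2 (n - p)) ≤
        multidegree (generatorExponents p) a := by
    refine le_of_eq_of_le ?_ (le_add_self : linearCombination ℕ _ a.2 ≤ _)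
    rw [ha, linearCombination_generatorExponents, linearCombination_generatorExponents]
    simp only [Finsupp.add_apply, Finsupp.single_eq_same, ne_eq, Fin.reduceEq, zero_ne_one,
      one_ne_zero, not_false_eq_true, Finsupp.single_eq_of_ne, add_zero, zero_add, mul_zero,
      mul_one]
    rw [mul_comm, ← mul_add, Nat.add_sub_of_le hn.le]
  refine eqvGen_linked_of_linearCombination_le hab (i := 2) (j := 0) ?_ hle ?_ ?_ ?_ hb
  · simp only [map_add, Finsupp.degree_single]
    omega
  · rw [ha, Finsupp.single_eq_same]; omega
  · rw [Finsupp.add_apply, Finsupp.single_eq_same]; omega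
  · simp

theorem eqvGen_linked_of_eq_single_degree (hp : 1 ≤ p) (hn : p < n)
    (hab : SameFibre (generatorExponents p) n a b) {i : Fin 3} (ha : a.2 = single i n) :
    EqvGen (Linked (generatorExponents p) n) a b := by
  have hn₂ : 2 ≤ n := by omega
  have hmax₀ (j) : generatorExponents p j 0 ≤ p := by
    fin_cases j <;> simp [generatorExponents, hp]
  have hmax₁ (j) : generatorExponents p j 1 ≤ p := by
    fin_cases j <;> simp [generatorExponents]
  fin_cases i
  · exact eqvGen_linked_of_eq_single rfl hmax₀ hn₂ hab ha
  · exact eqvGen_linked_of_eq_single rfl hmax₁ hn₂ hab ha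
  · by_cases hb₀ : b.2 0 = 0
    · by_cases hb₂ : b.2 2 = 0
      · have hb : b.2 = single 1 n := by
          have := hab.2.1
          rw [Finsupp.degree_eq_sum, Fin.sum_univ_three] at this
          ext j
          fin_cases j <;> simp <;> omega
        exact .symm _ _ (eqvGen_linked_of_eq_single rfl hmax₁ hn₂ hab.symm hb)
      · have ha₂ : a.2 2 = n := ha ▸ Finsupp.single_eq_same
        exact .rel _ _ ⟨hab, 2, by omega, hb₂⟩
    · exact eqvGen_linked_of_eq_single_two hp hn hab ha hb₀

theorem eqvGen_linked_of_sameFibre (hp : 1 ≤ p) (hn : p < n)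
    (hab : SameFibre (generatorExponents p) n a b) :
    EqvGen (Linked (generatorExponents p) n) a b := by
  by_cases h : Disjoint a.2.support b.2.support
  · obtain ⟨i, ha | hb⟩ := exists_eq_single_of_disjoint h
    · exact eqvGen_linked_of_eq_single_degree hp hn hab (hab.1 ▸ ha)
    · exact .symm _ _ (eqvGen_linked_of_eq_single_degree hp hn hab.symm (hab.2.1 ▸ hb))
  · obtain ⟨i, hai, hbi⟩ := Finset.not_disjoint_iff.1 h
    exact .rel _ _ ⟨hab, i, Finsupp.mem_support_iff.1 hai, Finsupp.mem_support_iff.1 hbi⟩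

theorem sameFibre_single_two (hn : 1 ≤ n) (hnp : n ≤ p) :
    SameFibre (generatorExponents p) n (single 0 (p - n), single 2 n)
      (single 1 (p - n), single 0 1 + single 1 (n - 1)) := by
  obtain ⟨l, rfl⟩ := Nat.exists_eq_add_of_le hnp
  obtain ⟨j, rfl⟩ := Nat.exists_eq_add_of_le' hn
  simp only [sameFibre_generatorExponents_iff, Finsupp.add_apply, Finsupp.single_eq_same, ne_eq,
    Fin.reduceEq, zero_ne_one, one_ne_zero, not_false_eq_true, Finsupp.single_eq_of_ne, add_zero,
    zero_add, mul_zero, mul_one, add_tsub_cancel_left, add_tsub_cancel_right, Nat.succ_add_sub_one]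
  exact ⟨trivial, by omega, by omega, by ring⟩

theorem eq_of_linked_single_two (hnp : n ≤ p)
    (h : Linked (generatorExponents p) n (single 0 (p - n), single 2 n) b) :
    b = (single 0 (p - n), single 2 n) := by
  obtain ⟨hab, i, hi, hbi⟩ := h
  obtain rfl : i = 2 := by
    by_contra hne
    exact hi (Finsupp.single_eq_of_ne hne)
  obtain ⟨-, hdeg, h₀, h₁⟩ := sameFibre_generatorExponents_iff.1 hab
  simp only [Finsupp.single_eq_same, ne_eq, Fin.reduceEq, one_ne_zero, not_false_eq_true,
    Finsupp.single_eq_of_ne, mul_zero, zero_add] at h₀ h₁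
  have hb₀ : b.2 0 = 0 := by
    by_contra h
    have := Nat.le_mul_of_pos_right p (Nat.pos_of_ne_zero h)
    omega
  have hb₁ : b.1 1 + b.2 1 = 0 := by
    obtain ⟨q, rfl⟩ : ∃ q, p = q + 1 := ⟨p - 1, by omega⟩
    rw [← hdeg, hb₀] at h₁
    simp only [add_tsub_cancel_right, zero_add] at h₁
    nlinarith
  have h₃ : b.2 2 = n := by omega
  rw [hb₀] at h₀
  ext j
  · fin_cases j <;> simp [-Finsupp.single_tsub] <;> omega
  · fin_cases j <;> simp [-Finsupp.single_tsub] <;> omega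

theorem not_eqvGen_linked_single_two (hnp : n ≤ p) :
    ¬ EqvGen (Linked (generatorExponents p) n) (single 0 (p - n), single 2 n)
      (single 1 (p - n), single 0 1 + single 1 (n - 1)) := by
  intro h
  have heq := eq_of_eqvGen_of_isolated (fun z w hzw =>
    ⟨fun hz => eq_of_linked_single_two hnp (hz ▸ hzw),
      fun hw => eq_of_linked_single_two hnp (hw ▸ hzw.symm)⟩) h
  simpa using congrArg (fun a => a.2 0) heq

variable (k : Type*) [CommRing k] [Nontrivial k]

theorem not_reesRelStable_generatorExponents (hn : 1 ≤ n) (hnp : n ≤ p) :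
    ¬ reesRelStable (fun i => monomial (generatorExponents p i) (1 : k)) n := by
  obtain ⟨n, rfl⟩ := Nat.exists_eq_add_of_le' hn
  rw [reesRelStable_monomial_iff]
  exact fun h => not_eqvGen_linked_single_two hnp (h _ _ (sameFibre_single_two hn hnp))

theorem reesRelStable_generatorExponents (hp : 1 ≤ p) (hpn : p < n) :
    reesRelStable (fun i => monomial (generatorExponents p i) (1 : k)) n := by
  obtain ⟨n, rfl⟩ := Nat.exists_eq_add_of_le' (hp.trans hpn.le)
  rw [reesRelStable_monomial_iff]
  exact fun a b => eqvGen_linked_of_sameFibre hp hpn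

end TwoVariables

theorem stmt_11_general {k : Type*} [CommRing k] [Nontrivial k] (p : ℕ) (hp : 1 ≤ p) :
    let a₁ : MvPolynomial (Fin 2) k := MvPolynomial.X 0
    let a₂ : MvPolynomial (Fin 2) k := MvPolynomial.X 1
    let x : Fin 3 → MvPolynomial (Fin 2) k := ![a₁ ^ p, a₂ ^ p, a₁ * a₂ ^ (p - 1)]
    siftedDegrees x = Set.Icc 1 p ∧ siftedType x = p ∧ relType x = p ∧
    (∀ n, 2 ≤ n → n ≤ p → ¬ reesRelStable x n) ∧
    (∀ n, p + 1 ≤ n → reesRelStable x n) := by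
  intro a₁ a₂ x
  have hx : x = fun i => MvPolynomial.monomial (generatorExponents p i) 1 :=
    (monomial_generatorExponents k p).symm
  have hns (n) (hn : 2 ≤ n) (hnp : n ≤ p) : ¬ reesRelStable x n :=
    hx ▸ not_reesRelStable_generatorExponents k (by omega) hnp
  have hs (n) (hn : p + 1 ≤ n) : reesRelStable x n :=
    hx ▸ reesRelStable_generatorExponents k hp hn
  have hSD : siftedDegrees x = Set.Icc 1 p := siftedDegrees_eq_Icc hp hns hs
  refine ⟨hSD, ?_, relType_eq hp hns hs, hns, hs⟩
  simp [siftedType, hSD, Set.ncard_eq_toFinset_card']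

/-- For `A = k[a₁,a₂]`, `p ≥ 3`, and `I = (a₁^p, a₂^p, a₁a₂^{p-1})`:
`SD(I) = {1,2,…,p}`, so `st(I) = rt(I) = p`; concretely `L_n ≠ V_1·L_{n-1}` for
`2 ≤ n ≤ p` and `L_n = V_1·L_{n-1}` for `n ≥ p+1`. -/
theorem stmt_11 {k : Type*} [Field k] (p : ℕ) (hp : 3 ≤ p) :
    let a₁ : MvPolynomial (Fin 2) k := MvPolynomial.X 0
    let a₂ : MvPolynomial (Fin 2) k := MvPolynomial.X 1
    let x : Fin 3 → MvPolynomial (Fin 2) k := ![a₁ ^ p, a₂ ^ p, a₁ * a₂ ^ (p - 1)]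
    siftedDegrees x = Set.Icc 1 p ∧ siftedType x = p ∧ relType x = p ∧
    (∀ n, 2 ≤ n → n ≤ p → ¬ reesRelStable x n) ∧
    (∀ n, p + 1 ≤ n → reesRelStable x n) := by
  exact stmt_11_general p (by omega)
end

section
/- Let k be a field, A = k[a_1,a_2], p ≥ 5 an odd integer, and I = (a_1^p, a_2^p, a_1^2 a_2^{p-2}). Then SD(I) = {1, 2, …, (p-1)/2} ∪ {(p+1)/2, p}; hence st(I) = (p+3)/2 and rt(I) = p. -/
/-!
For an ideal of `A = R[σ]` generated by monomials `x^(m i)`, both `V` and `A` are graded by the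
exponents `d` of `A`. In degree `n`, the terms of multidegree `d` are indexed by the `T^e` of degree
`n` whose image divides `x^d`, and `L_n` is spanned by their differences. A difference lies in
`V_1·L_{n-1}` as soon as the two monomials share a variable, so `L_n = V_1·L_{n-1}` exactly when,
for every `d`, the graph of shared variables on these monomials is connected.

For `(a₁^p, a₂^p, a₁²a₂^(p-2))` with presentation variables `U, V, W`, the monomial `W^n` is
isolated from `U V^(n-1)` over the lcm of their images if `2 ≤ n ≤ (p+1)/2`, and from `U² V^(p-2)`,
which has the same image, if `n = p`. In all other degrees `n ≥ 2`, any two monomials without a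
common variable have a common neighbor over the lcm of their images.
-/

namespace ReesRelations

open MvPolynomial Finsupp

section ReesRel

variable {A : Type*} [CommRing A] {r : ℕ} {x : Fin r → A} {n : ℕ}

lemma aeval_C_mul_X_of_isHomogeneous (x : Fin r → A) {f : MvPolynomial (Fin r) A}
    (hf : f.IsHomogeneous n) :
    aeval (fun i ↦ Polynomial.C (x i) * Polynomial.X) f =
      Polynomial.C (aeval x f) * Polynomial.X ^ n := by
  conv_lhs => rw [f.as_sum]
  conv_rhs => rw [f.as_sum]
  simp only [map_sum, Finset.sum_mul]
  refine Finset.sum_congr rfl fun e he ↦ ?_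
  have degree_eq : ∑ i ∈ e.support, e i = n := (hf.degree_eq_sum_deg_support he).symm
  simp only [aeval_monomial, Finsupp.prod, mul_pow, Finset.prod_mul_distrib,
    Finset.prod_pow_eq_pow_sum, degree_eq, map_mul, map_prod, map_pow,
    Polynomial.algebraMap_eq, Algebra.algebraMap_self_apply, mul_assoc]

lemma mem_reesRel_iff {f : MvPolynomial (Fin r) A} :
    f ∈ reesRel x n ↔ f.IsHomogeneous n ∧ aeval x f = 0 := by
  rw [reesRel, Submodule.mem_inf, Submodule.restrictScalars_mem, RingHom.mem_ker,
    mem_homogeneousSubmodule, and_comm]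
  refine and_congr_right fun hf ↦ ?_
  rw [aeval_C_mul_X_of_isHomogeneous x hf, Polynomial.C_mul_X_pow_eq_monomial,
    Polynomial.monomial_eq_zero_iff]

lemma homogeneousSubmodule_one_mul_reesRel_le :
    homogeneousSubmodule (Fin r) A 1 * reesRel x n ≤ reesRel x (n + 1) := by
  refine Submodule.mul_le.2 fun l hl h hh ↦ ?_
  obtain ⟨hhom, hzero⟩ := mem_reesRel_iff.1 hh
  refine mem_reesRel_iff.2 ⟨?_, by rw [map_mul, hzero, mul_zero]⟩
  rw [add_comm]
  exact hl.mul hhom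

lemma reesRelStable_succ_iff_le :
    reesRelStable x (n + 1) ↔
      reesRel x (n + 1) ≤ homogeneousSubmodule (Fin r) A 1 * reesRel x n :=
  ⟨le_of_eq, fun h ↦ h.antisymm homogeneousSubmodule_one_mul_reesRel_le⟩

lemma relType_eq_of_isGreatest {s : ℕ} (hs : IsGreatest (siftedDegrees x) s) :
    relType x = s := by
  have one_le : 1 ≤ s := hs.2 (Or.inl rfl)
  refine IsLeast.csInf_eq ⟨⟨one_le, fun n hn ↦ ?_⟩, fun t ⟨ht, hstable⟩ ↦ ?_⟩
  · by_contra hunstable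
    have : n ≤ s := hs.2 (Or.inr ⟨by omega, hunstable⟩)
    omega
  · rcases hs.1 with rfl | ⟨-, hunstable⟩
    · exact ht
    · by_contra! hlt
      exact hunstable (hstable s hlt)

end ReesRel

section MonomialIdeal

variable {σ : Type*} {r : ℕ} (m : Fin r → σ →₀ ℕ)

/-- The degree-`n` monomials `T^e` of `V` whose image in `A = R[σ]` under `T_i ↦ x^(m i)` divides
the monomial `x^d`; they index the terms of multidegree `d` in `V_n`. -/
def degreeFiber (n : ℕ) (d : σ →₀ ℕ) : Set (Fin r →₀ ℕ) :=
  {e | e.degree = n ∧ weight m e ≤ d}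

/-- The graph on `degreeFiber m n d` joining two distinct monomials when they share a variable. -/
def fiberGraph (n : ℕ) (d : σ →₀ ℕ) : SimpleGraph (degreeFiber m n d) where
  Adj e e' := e ≠ e' ∧ ¬ Disjoint e.1 e'.1
  symm := ⟨fun _ _ h ↦ ⟨h.1.symm, fun hdisj ↦ h.2 hdisj.symm⟩⟩
  loopless := ⟨fun _ h ↦ h.1 rfl⟩

lemma not_disjoint_iff_exists_ne_zero {ι : Type*} {e e' : ι →₀ ℕ} :
    ¬ Disjoint e e' ↔ ∃ i, e i ≠ 0 ∧ e' i ≠ 0 := by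
  simp only [Finsupp.disjoint_iff, Finset.not_disjoint_iff, Finsupp.mem_support_iff]

variable (R : Type*) [CommRing R]

/-- The generators `x^(m i)` of a monomial ideal of `A = R[σ]`. -/
noncomputable def monomialGens : Fin r → MvPolynomial σ R := fun i ↦ monomial (m i) 1

/-- The term of `V = A[T_1,…,T_r]` with `T`-exponent `e` that maps to `x^d` under `T_i ↦ x^(m i)`;
meaningful only if `weight m e ≤ d`, because of the truncated subtraction. -/
noncomputable def fiberTerm (d : σ →₀ ℕ) (e : Fin r →₀ ℕ) :
    MvPolynomial (Fin r) (MvPolynomial σ R) :=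
  monomial e (monomial (d - weight m e) 1)

variable {m R} {n : ℕ} {d : σ →₀ ℕ}

lemma aeval_monomialGens_monomial (e : Fin r →₀ ℕ) (c : MvPolynomial σ R) :
    aeval (monomialGens m R) (monomial e c) = c * monomial (weight m e) 1 := by
  rw [aeval_monomial, weight_apply, Finsupp.sum, monomial_sum_one]
  simp only [Finsupp.prod, monomialGens, monomial_pow, one_pow, Algebra.algebraMap_self_apply]

lemma aeval_fiberTerm {e : Fin r →₀ ℕ} (he : weight m e ≤ d) :
    aeval (monomialGens m R) (fiberTerm m R d e) = monomial d 1 := by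
  rw [fiberTerm, aeval_monomialGens_monomial, monomial_mul, tsub_add_cancel_of_le he, mul_one]

lemma fiberTerm_sub_mem_reesRel {e e' : Fin r →₀ ℕ}
    (he : e ∈ degreeFiber m n d) (he' : e' ∈ degreeFiber m n d) :
    fiberTerm m R d e - fiberTerm m R d e' ∈ reesRel (monomialGens m R) n :=
  mem_reesRel_iff.2 ⟨(isHomogeneous_monomial _ he.1).sub (isHomogeneous_monomial _ he'.1), by
    rw [map_sub, aeval_fiberTerm he.2, aeval_fiberTerm he'.2, sub_self]⟩

section Generation

-- The linear map sending `x^d` to a chosen term of multidegree `d` is, modulo `M`, a left inverse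
-- of `T_i ↦ x^(m i)` in degree `n`.
lemma reesRel_le_of_fiberTerm_sub_mem
    {M : Submodule (MvPolynomial σ R) (MvPolynomial (Fin r) (MvPolynomial σ R))}
    (hM : ∀ d, ∀ e ∈ degreeFiber m n d, ∀ e' ∈ degreeFiber m n d,
      fiberTerm m R d e - fiberTerm m R d e' ∈ M) :
    reesRel (monomialGens m R) n ≤ M := by
  intro f hf
  obtain ⟨hhom, hzero⟩ := mem_reesRel_iff.1 hf
  have exists_rep (d) : ∃ g, ∀ e ∈ degreeFiber m n d, fiberTerm m R d e - g ∈ M := by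
    rcases (degreeFiber m n d).eq_empty_or_nonempty with hempty | ⟨e', he'⟩
    · exact ⟨0, by simp only [hempty, Set.mem_empty_iff_false, false_imp_iff, implies_true]⟩
    · exact ⟨fiberTerm m R d e', fun e he ↦ hM d e he e' he'⟩
  choose rep hrep using exists_rep
  let ρ := (basisMonomials σ R).constr R rep
  have ρ_monomial (d c) : ρ (monomial d c) = c • rep d := by
    rw [← mul_one c, ← smul_eq_mul, ← smul_monomial, map_smul, smul_eq_mul, mul_one]
    exact congrArg (c • ·) ((basisMonomials σ R).constr_basis R rep d)
  have sub_mem_of_monomial (e : Fin r →₀ ℕ) (he : e.degree = n) (c : MvPolynomial σ R) :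
      monomial e c - ρ (aeval (monomialGens m R) (monomial e c)) ∈ M := by
    induction c using MvPolynomial.induction_on' with
    | monomial a s =>
      have mem := M.smul_of_tower_mem s (hrep (a + weight m e) e ⟨he, le_add_self⟩)
      rwa [fiberTerm, add_tsub_cancel_right, smul_sub, smul_monomial, smul_monomial, smul_eq_mul,
        mul_one, ← ρ_monomial, ← mul_one s, ← monomial_mul, mul_one,
        ← aeval_monomialGens_monomial] at mem
    | add c c' hc hc' =>
      simpa only [map_add, add_sub_add_comm] using M.add_mem hc hc'
  have sub_mem : f - ρ (aeval (monomialGens m R) f) ∈ M := by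
    rw [f.as_sum, map_sum, map_sum, ← Finset.sum_sub_distrib]
    exact M.sum_mem fun e he ↦
      sub_mem_of_monomial e (hhom.degree_eq_sum_deg_support he).symm _
  rwa [hzero, map_zero, sub_zero] at sub_mem

lemma fiberTerm_add_single (d : σ →₀ ℕ) (e : Fin r →₀ ℕ) (i : Fin r) :
    fiberTerm m R d (e + single i 1) = X i * fiberTerm m R (d - m i) e := by
  rw [fiberTerm, fiberTerm, map_add, weight_single, one_smul, add_comm (weight m e),
    tsub_add_eq_tsub_tsub, X, monomial_mul, one_mul, add_comm]

lemma exists_add_single_of_mem_degreeFiber {e : Fin r →₀ ℕ} {i : Fin r}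
    (he : e ∈ degreeFiber m (n + 1) d) (hi : e i ≠ 0) :
    ∃ a ∈ degreeFiber m n (d - m i), e = a + single i 1 := by
  obtain ⟨a, rfl⟩ : ∃ a, e = a + single i 1 :=
    ⟨e - single i 1, (tsub_add_cancel_of_le (single_le_iff.2 (Nat.one_le_iff_ne_zero.2 hi))).symm⟩
  obtain ⟨hdeg, hle⟩ := he
  rw [map_add, degree_single] at hdeg
  rw [map_add, weight_single, one_smul] at hle
  exact ⟨a, ⟨Nat.succ_injective hdeg, le_tsub_of_add_le_right hle⟩, rfl⟩

lemma fiberTerm_sub_mem_of_not_disjoint {e e' : Fin r →₀ ℕ}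
    (he : e ∈ degreeFiber m (n + 1) d) (he' : e' ∈ degreeFiber m (n + 1) d)
    (hshare : ¬ Disjoint e e') :
    fiberTerm m R d e - fiberTerm m R d e' ∈
      homogeneousSubmodule (Fin r) (MvPolynomial σ R) 1 * reesRel (monomialGens m R) n := by
  obtain ⟨i, hi, hi'⟩ := not_disjoint_iff_exists_ne_zero.1 hshare
  obtain ⟨a, ha, rfl⟩ := exists_add_single_of_mem_degreeFiber he hi
  obtain ⟨a', ha', rfl⟩ := exists_add_single_of_mem_degreeFiber he' hi'
  rw [fiberTerm_add_single, fiberTerm_add_single, ← mul_sub]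
  exact Submodule.mul_mem_mul (isHomogeneous_X _ i) (fiberTerm_sub_mem_reesRel ha ha')

lemma fiberTerm_sub_mem_of_walk {e e' : degreeFiber m (n + 1) d}
    (walk : (fiberGraph m (n + 1) d).Walk e e') :
    fiberTerm m R d e.1 - fiberTerm m R d e'.1 ∈
      homogeneousSubmodule (Fin r) (MvPolynomial σ R) 1 * reesRel (monomialGens m R) n := by
  induction walk with
  | nil =>
    rw [sub_self]
    exact zero_mem _
  | @cons e a e' hadj _ ih =>
    rw [← sub_add_sub_cancel _ (fiberTerm m R d a)]
    exact add_mem (fiberTerm_sub_mem_of_not_disjoint e.2 a.2 hadj.2) ih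

lemma reesRelStable_of_preconnected (h : ∀ d, (fiberGraph m (n + 1) d).Preconnected) :
    reesRelStable (monomialGens m R) (n + 1) :=
  reesRelStable_succ_iff_le.2 <| reesRel_le_of_fiberTerm_sub_mem fun d e he e' he' ↦
    (h d ⟨e, he⟩ ⟨e', he'⟩).elim fiberTerm_sub_mem_of_walk

end Generation

section Obstruction

variable (m R) in
/-- The `A`-linear map `V → A` sending `T^e` to its image `x^(weight m e)` if `e ∈ S`, and to `0`
otherwise. For `S` a connected component of a fiber graph it detects the terms in that component. -/
noncomputable def evalOn (S : Set (Fin r →₀ ℕ)) :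
    MvPolynomial (Fin r) (MvPolynomial σ R) →ₗ[MvPolynomial σ R] MvPolynomial σ R :=
  (basisMonomials (Fin r) (MvPolynomial σ R)).constr (MvPolynomial σ R)
    (S.indicator fun e ↦ monomial (weight m e) 1)

variable {S T : Set (Fin r →₀ ℕ)} {f : MvPolynomial (Fin r) (MvPolynomial σ R)}

lemma evalOn_monomial (S : Set (Fin r →₀ ℕ)) (e : Fin r →₀ ℕ) (c : MvPolynomial σ R) :
    evalOn m R S (monomial e c) = c * S.indicator (fun e ↦ monomial (weight m e) 1) e := by
  rw [← mul_one c, ← smul_eq_mul, ← smul_monomial, map_smul, smul_eq_mul, smul_eq_mul, mul_one]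
  exact congrArg (c * ·) ((basisMonomials (Fin r) _).constr_basis _ _ e)

open Classical in
lemma coeff_evalOn_monomial (S : Set (Fin r →₀ ℕ)) (d : σ →₀ ℕ) (e : Fin r →₀ ℕ)
    (c : MvPolynomial σ R) :
    coeff d (evalOn m R S (monomial e c)) =
      if e ∈ S ∧ weight m e ≤ d then coeff (d - weight m e) c else 0 := by
  by_cases he : e ∈ S
  · simp only [evalOn_monomial, Set.indicator_of_mem he, coeff_mul_monomial', mul_one, he, true_and]
  · simp only [evalOn_monomial, Set.indicator_of_notMem he, mul_zero, coeff_zero, he, false_and,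
      if_false]

lemma evalOn_univ (f : MvPolynomial (Fin r) (MvPolynomial σ R)) :
    evalOn m R Set.univ f = aeval (monomialGens m R) f := by
  rw [f.as_sum, map_sum, map_sum]
  simp only [evalOn_monomial, aeval_monomialGens_monomial, Set.indicator_univ]

lemma evalOn_empty (f : MvPolynomial (Fin r) (MvPolynomial σ R)) : evalOn m R ∅ f = 0 := by
  rw [f.as_sum, map_sum]
  simp only [evalOn_monomial, Set.indicator_empty, mul_zero, Finset.sum_const_zero]

lemma coeff_evalOn_congr (h : ∀ e ∈ f.support, weight m e ≤ d → (e ∈ S ↔ e ∈ T)) :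
    coeff d (evalOn m R S f) = coeff d (evalOn m R T f) := by
  classical
  rw [f.as_sum, map_sum, map_sum, coeff_sum, coeff_sum]
  refine Finset.sum_congr rfl fun e he ↦ ?_
  rw [coeff_evalOn_monomial, coeff_evalOn_monomial]
  exact if_congr (and_congr_left (h e he)) rfl rfl

variable {h : MvPolynomial (Fin r) (MvPolynomial σ R)}

-- All terms of `X i * h` in the fiber contain `T_i`, so they lie in `S` together or not at all.
lemma coeff_evalOn_X_mul_eq_zero
    (hS : ∀ a ∈ S, ∀ b ∈ degreeFiber m (n + 1) d, ¬ Disjoint a b → b ∈ S)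
    (hh : h ∈ reesRel (monomialGens m R) n) (i : Fin r) :
    coeff d (evalOn m R S (X i * h)) = 0 := by
  obtain ⟨hhom, hzero⟩ := mem_reesRel_iff.1 hh
  have mem_fiber {e} (he : e ∈ (X i * h).support) (hle : weight m e ≤ d) :
      e ∈ degreeFiber m (n + 1) d :=
    ⟨by rw [add_comm n]; exact (((isHomogeneous_X _ i).mul hhom).degree_eq_sum_deg_support he).symm,
      hle⟩
  have index_ne_zero {e : Fin r →₀ ℕ} (he : e ∈ (X i * h).support) : e i ≠ 0 := by
    rw [support_X_mul] at he
    obtain ⟨a, -, rfl⟩ := Finset.mem_map.1 he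
    simp
  by_cases hmeet : ∃ a ∈ S, a i ≠ 0
  · obtain ⟨a, haS, hai⟩ := hmeet
    rw [coeff_evalOn_congr (T := Set.univ), evalOn_univ, map_mul, hzero, mul_zero, coeff_zero]
    exact fun e he hle ↦ iff_of_true (hS a haS e (mem_fiber he hle)
      (not_disjoint_iff_exists_ne_zero.2 ⟨i, hai, index_ne_zero he⟩)) trivial
  · rw [coeff_evalOn_congr (T := ∅), evalOn_empty, coeff_zero]
    exact fun e he _ ↦ iff_of_false
      (fun heS ↦ hmeet ⟨e, heS, index_ne_zero he⟩) id

lemma coeff_evalOn_eq_zero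
    (hS : ∀ a ∈ S, ∀ b ∈ degreeFiber m (n + 1) d, ¬ Disjoint a b → b ∈ S)
    (hf : f ∈ homogeneousSubmodule (Fin r) (MvPolynomial σ R) 1 * reesRel (monomialGens m R) n) :
    coeff d (evalOn m R S f) = 0 := by
  induction hf using Submodule.mul_induction_on' with
  | mem_mul_mem l hl h hh =>
    rw [homogeneousSubmodule_one_eq_span_X] at hl
    induction hl using Submodule.span_induction generalizing h with
    | mem l hl =>
      obtain ⟨i, rfl⟩ := hl
      exact coeff_evalOn_X_mul_eq_zero hS hh i
    | zero => rw [zero_mul, map_zero, coeff_zero]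
    | add l l' _ _ ihl ihl' => rw [add_mul, map_add, coeff_add, ihl h hh, ihl' h hh, add_zero]
    | smul c l _ ihl =>
      rw [smul_mul_assoc, ← mul_smul_comm]
      exact ihl (c • h) (Submodule.smul_mem _ c hh)
  | add f _ g _ ihf ihg => rw [map_add, coeff_add, ihf, ihg, add_zero]

lemma preconnected_of_reesRelStable [Nontrivial R]
    (hstable : reesRelStable (monomialGens m R) (n + 1)) (d : σ →₀ ℕ) :
    (fiberGraph m (n + 1) d).Preconnected := by
  classical
  rintro ⟨e, he⟩ ⟨e', he'⟩
  by_contra hunreachable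
  let S : Set (Fin r →₀ ℕ) :=
    {a | ∃ ha : a ∈ degreeFiber m (n + 1) d, (fiberGraph m (n + 1) d).Reachable ⟨e, he⟩ ⟨a, ha⟩}
  have S_closed : ∀ a ∈ S, ∀ b ∈ degreeFiber m (n + 1) d, ¬ Disjoint a b → b ∈ S := by
    rintro a ⟨ha, hreach⟩ b hb hshare
    rcases eq_or_ne a b with rfl | hne
    · exact ⟨ha, hreach⟩
    · exact ⟨hb, hreach.trans (SimpleGraph.Adj.reachable
        ⟨fun hab ↦ hne (congrArg Subtype.val hab), hshare⟩)⟩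
  have he_mem : e ∈ S := ⟨he, .refl _⟩
  have he'_notMem : e' ∉ S := fun ⟨_, hreach⟩ ↦ hunreachable hreach
  have coeff_zero := coeff_evalOn_eq_zero S_closed
    (reesRelStable_succ_iff_le.1 hstable (fiberTerm_sub_mem_reesRel (R := R) he he'))
  rw [map_sub, coeff_sub, fiberTerm, fiberTerm, coeff_evalOn_monomial, coeff_evalOn_monomial,
    if_pos ⟨he_mem, he.2⟩, if_neg fun hmem ↦ he'_notMem hmem.1, coeff_monomial, if_pos rfl,
    sub_zero] at coeff_zero
  exact one_ne_zero coeff_zero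

end Obstruction

theorem reesRelStable_succ_iff_preconnected [Nontrivial R] :
    reesRelStable (monomialGens m R) (n + 1) ↔ ∀ d, (fiberGraph m (n + 1) d).Preconnected :=
  ⟨preconnected_of_reesRelStable, reesRelStable_of_preconnected⟩

variable (m n) in
/-- Two degree-`n` monomials of `V` have a common neighbor in the fiber graph over the least common
multiple of their images in `A`, hence in every fiber graph that contains both of them. -/
def HasCommonNeighbor (e e' : Fin r →₀ ℕ) : Prop :=
  ∃ a : Fin r →₀ ℕ, a.degree = n ∧ weight m a ≤ weight m e ⊔ weight m e' ∧
    ¬ Disjoint e a ∧ ¬ Disjoint e' a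

lemma HasCommonNeighbor.symm {e e' : Fin r →₀ ℕ} (h : HasCommonNeighbor m n e e') :
    HasCommonNeighbor m n e' e := by
  obtain ⟨a, hdeg, hle, hea, he'a⟩ := h
  exact ⟨a, hdeg, sup_comm (weight m e) _ ▸ hle, he'a, hea⟩

lemma preconnected_of_hasCommonNeighbor
    (h : ∀ e e' : Fin r →₀ ℕ, e.degree = n → e'.degree = n → Disjoint e e' →
      HasCommonNeighbor m n e e') (d : σ →₀ ℕ) :
    (fiberGraph m n d).Preconnected := by
  have reachable_of_not_disjoint (a b : degreeFiber m n d) (hshare : ¬ Disjoint a.1 b.1) :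
      (fiberGraph m n d).Reachable a b := by
    rcases eq_or_ne a b with rfl | hne
    · exact .refl _
    · exact SimpleGraph.Adj.reachable ⟨hne, hshare⟩
  intro e e'
  by_cases hdisj : Disjoint e.1 e'.1
  · obtain ⟨a, hdeg, hle, hea, he'a⟩ := h e e' e.2.1 e'.2.1 hdisj
    let a' : degreeFiber m n d := ⟨a, hdeg, hle.trans (sup_le e.2.2 e'.2.2)⟩
    exact (reachable_of_not_disjoint e a' hea).trans (reachable_of_not_disjoint e' a' he'a).symm
  · exact reachable_of_not_disjoint e e' hdisj

lemma not_preconnected_of_isolated {e e' : Fin r →₀ ℕ} (he : e.degree = n) (he' : e'.degree = n)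
    (hne : e ≠ e')
    (hisolated : ∀ a : Fin r →₀ ℕ, a.degree = n → weight m a ≤ weight m e ⊔ weight m e' →
      ¬ Disjoint e a → a = e) :
    ¬ (fiberGraph m n (weight m e ⊔ weight m e')).Preconnected := by
  intro hconn
  obtain ⟨walk⟩ := hconn ⟨e, he, le_sup_left⟩ ⟨e', he', le_sup_right⟩
  cases walk with
  | nil => exact hne rfl
  | @cons _ a _ hadj _ => exact hadj.1 (Subtype.ext (hisolated a a.2.1 a.2.2 hadj.2).symm)

end MonomialIdeal

section AlmostPurePowers

/-- The exponents of the generators `a₁^p, a₂^p, a₁²a₂^(p-2)` for `p = 2c + 3`. -/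
noncomputable def genExponents (c : ℕ) : Fin 3 → Fin 2 →₀ ℕ :=
  ![single 0 (2 * c + 3), single 1 (2 * c + 3), single 0 2 + single 1 (2 * c + 1)]

/-- The monomial `U^u V^v W^w` of the polynomial ring `V = A[U, V, W]` on three generators. -/
noncomputable def triple (u v w : ℕ) : Fin 3 →₀ ℕ := equivFunOnFinite.symm ![u, v, w]

/-- The excess `i - 2n` of the `a₁`-exponent over that of `(a₁²a₂^(p-2))^n`, where `a₁^i a₂^j` is
the image of a degree-`n` monomial of `V`; as `i + j = p * n`, it determines both exponents. -/
def imbalance (c : ℕ) (e : Fin 3 →₀ ℕ) : ℤ := (2 * c + 1) * e 0 - 2 * e 1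

variable {c n : ℕ} {e e' a : Fin 3 →₀ ℕ}

lemma generators_eq_monomialGens (R : Type*) [CommRing R] (c : ℕ) :
    ![X 0 ^ (2 * c + 3), X 1 ^ (2 * c + 3), X 0 ^ 2 * X 1 ^ (2 * c + 1)] =
      monomialGens (genExponents c) R := by
  funext i
  fin_cases i <;> simp [monomialGens, genExponents, X_pow_eq_monomial, monomial_mul]

lemma degree_fin_three (e : Fin 3 →₀ ℕ) : e.degree = e 0 + e 1 + e 2 := by
  rw [degree_eq_sum, Fin.sum_univ_three]

lemma degree_triple (u v w : ℕ) : (triple u v w).degree = u + v + w :=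
  degree_fin_three _

lemma imbalance_triple (c u v w : ℕ) : imbalance c (triple u v w) = (2 * c + 1) * u - 2 * v :=
  rfl

lemma weight_genExponents_zero (he : e.degree = n) :
    (weight (genExponents c) e 0 : ℤ) = 2 * n + imbalance c e := by
  have weight_eq : weight (genExponents c) e 0 = e 0 * (2 * c + 3) + e 2 * 2 := by
    simp [weight_apply, sum_fintype, Fin.sum_univ_three, genExponents, mul_add]
  rw [weight_eq, imbalance, ← he, degree_fin_three]
  push_cast
  ring

lemma weight_genExponents_one (he : e.degree = n) :
    (weight (genExponents c) e 1 : ℤ) = (2 * c + 1) * n - imbalance c e := by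
  have weight_eq : weight (genExponents c) e 1 = e 1 * (2 * c + 3) + e 2 * (2 * c + 1) := by
    simp [weight_apply, sum_fintype, Fin.sum_univ_three, genExponents, mul_add]
  rw [weight_eq, imbalance, ← he, degree_fin_three]
  push_cast
  ring

lemma weight_genExponents_le_sup_iff (ha : a.degree = n) (he : e.degree = n)
    (he' : e'.degree = n) :
    weight (genExponents c) a ≤ weight (genExponents c) e ⊔ weight (genExponents c) e' ↔
      imbalance c a ∈ Set.uIcc (imbalance c e) (imbalance c e') := by
  rw [Finsupp.le_def, Fin.forall_fin_two, Finsupp.sup_apply, Finsupp.sup_apply, Set.uIcc,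
    Set.mem_Icc, ← Nat.cast_le (α := ℤ), ← Nat.cast_le (α := ℤ), Nat.cast_max, Nat.cast_max]
  simp only [weight_genExponents_zero, weight_genExponents_one, ha, he, he']
  lia

lemma hasCommonNeighbor_of_triple (u v w : ℕ) (he : e.degree = n) (he' : e'.degree = n)
    (hdeg : u + v + w = n)
    (hmem : ((2 * c + 1) * u - 2 * v : ℤ) ∈ Set.uIcc (imbalance c e) (imbalance c e'))
    (hshare : e 0 ≠ 0 ∧ u ≠ 0 ∨ e 1 ≠ 0 ∧ v ≠ 0 ∨ e 2 ≠ 0 ∧ w ≠ 0)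
    (hshare' : e' 0 ≠ 0 ∧ u ≠ 0 ∨ e' 1 ≠ 0 ∧ v ≠ 0 ∨ e' 2 ≠ 0 ∧ w ≠ 0) :
    HasCommonNeighbor (genExponents c) n e e' := by
  have degree_eq : (triple u v w).degree = n := (degree_triple u v w).trans hdeg
  have not_disjoint {f : Fin 3 →₀ ℕ}
      (hf : f 0 ≠ 0 ∧ u ≠ 0 ∨ f 1 ≠ 0 ∧ v ≠ 0 ∨ f 2 ≠ 0 ∧ w ≠ 0) : ¬ Disjoint f (triple u v w) := by
    rw [not_disjoint_iff_exists_ne_zero, Fin.exists_fin_succ, Fin.exists_fin_two]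
    exact hf
  exact ⟨triple u v w, degree_eq, (weight_genExponents_le_sup_iff degree_eq he he').2 hmem,
    not_disjoint hshare, not_disjoint hshare'⟩

lemma hasCommonNeighbor_of_pure_zero (hn : 2 ≤ n) (he : e.degree = n) (he' : e'.degree = n)
    (h1 : e 1 = 0) (h2 : e 2 = 0) (h0' : e' 0 = 0) :
    HasCommonNeighbor (genExponents c) n e e' := by
  have hdeg := degree_fin_three e ▸ he
  have hdeg' := degree_fin_three e' ▸ he'
  have imbalance_ge : (2 * c + 1 : ℤ) * 1 ≤ imbalance c e := by
    rw [imbalance, h1, Nat.cast_zero, mul_zero, sub_zero]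
    gcongr
    omega
  have imbalance_eq' : imbalance c e' = -2 * e' 1 := by
    simp only [imbalance, h0', Nat.cast_zero, mul_zero, zero_sub, neg_mul]
  by_cases hw : e' 2 = 0
  · exact hasCommonNeighbor_of_triple 1 (n - 1) 0 he he' (by omega)
      (by rw [Set.mem_uIcc]; omega) (by omega) (by omega)
  · exact hasCommonNeighbor_of_triple 1 0 (n - 1) he he' (by omega)
      (by rw [Set.mem_uIcc]; omega) (by omega) (by omega)

lemma hasCommonNeighbor_of_pure_one (hn : 2 ≤ n) (he : e.degree = n) (he' : e'.degree = n)
    (h0 : e 0 = 0) (h2 : e 2 = 0) (h1' : e' 1 = 0) :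
    HasCommonNeighbor (genExponents c) n e e' := by
  have hdeg := degree_fin_three e ▸ he
  have hdeg' := degree_fin_three e' ▸ he'
  have imbalance_eq : imbalance c e = -2 * n := by
    rw [imbalance, h0]
    push_cast
    omega
  have imbalance_eq' : imbalance c e' = (2 * c + 1) * e' 0 := by
    simp only [imbalance, h1', Nat.cast_zero, mul_zero, sub_zero]
  by_cases hw : e' 2 = 0
  · have imbalance_ge : (2 * c + 1 : ℤ) * 1 ≤ (2 * c + 1) * e' 0 := by gcongr; omega
    exact hasCommonNeighbor_of_triple 1 (n - 1) 0 he he' (by omega)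
      (by rw [Set.mem_uIcc]; omega) (by omega) (by omega)
  · have imbalance_nonneg : (0 : ℤ) ≤ (2 * c + 1) * e' 0 := by positivity
    exact hasCommonNeighbor_of_triple 0 1 (n - 1) he he' (by omega)
      (by rw [Set.mem_uIcc]; omega) (by omega) (by omega)

lemma hasCommonNeighbor_of_pure_two (hn : c + 3 ≤ n) (hne : n ≠ 2 * c + 3)
    (he : e.degree = n) (he' : e'.degree = n) (h0 : e 0 = 0) (h1 : e 1 = 0) (h2' : e' 2 = 0) :
    HasCommonNeighbor (genExponents c) n e e' := by
  have hdeg := degree_fin_three e ▸ he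
  have hdeg' := degree_fin_three e' ▸ he'
  have imbalance_eq : imbalance c e = 0 := by
    simp only [imbalance, h0, h1, Nat.cast_zero, mul_zero, sub_zero]
  have imbalance_eq' : imbalance c e' = (2 * c + 1) * e' 0 - 2 * e' 1 := rfl
  rcases Nat.eq_zero_or_pos (e' 0) with hu | hu
  · rw [hu] at imbalance_eq'
    exact hasCommonNeighbor_of_triple 0 1 (n - 1) he he' (by omega)
      (by rw [Set.mem_uIcc]; omega) (by omega) (by omega)
  rcases Nat.eq_zero_or_pos (e' 1) with hv | hv
  · have imbalance_ge : (2 * c + 1 : ℤ) * 1 ≤ (2 * c + 1) * e' 0 := by gcongr; omega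
    exact hasCommonNeighbor_of_triple 1 0 (n - 1) he he' (by omega)
      (by rw [Set.mem_uIcc]; omega) (by omega) (by omega)
  -- `U V^(c+1)` and `U V^c` have imbalance `-1` and `1`, the values closest to that of `W^n`.
  rcases lt_trichotomy (imbalance c e') 0 with hneg | hzero | hpos
  · exact hasCommonNeighbor_of_triple 1 (c + 1) (n - (c + 2)) he he' (by omega)
      (by rw [Set.mem_uIcc]; omega) (by omega) (by omega)
  · have balanced : 2 * (c * e' 0) + e' 0 = 2 * e' 1 := by
      zify
      linear_combination hzero - imbalance_eq'
    have even_u : 2 ∣ e' 0 := by omega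
    have mul_le : c * 2 ≤ c * e' 0 := Nat.mul_le_mul_left c (Nat.le_of_dvd hu even_u)
    exact hasCommonNeighbor_of_triple 2 (2 * c + 1) (n - (2 * c + 3)) he he' (by omega)
      (by rw [Set.mem_uIcc]; omega) (by omega) (by omega)
  · exact hasCommonNeighbor_of_triple 1 c (n - (c + 1)) he he' (by omega)
      (by rw [Set.mem_uIcc]; omega) (by omega) (by omega)

lemma hasCommonNeighbor_of_disjoint (hn : c + 3 ≤ n) (hne : n ≠ 2 * c + 3)
    (he : e.degree = n) (he' : e'.degree = n) (hdisj : Disjoint e e') :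
    HasCommonNeighbor (genExponents c) n e e' := by
  have hdeg := degree_fin_three e ▸ he
  have hdeg' := degree_fin_three e' ▸ he'
  have zero_or_zero (i) : e i = 0 ∨ e' i = 0 := by
    by_contra! hi
    exact not_disjoint_iff_exists_ne_zero.2 ⟨i, hi⟩ hdisj
  rcases zero_or_zero 0 with h0 | h0' <;> rcases zero_or_zero 1 with h1 | h1' <;>
    rcases zero_or_zero 2 with h2 | h2'
  · omega
  · exact hasCommonNeighbor_of_pure_two hn hne he he' h0 h1 h2'
  · exact hasCommonNeighbor_of_pure_one (by omega) he he' h0 h2 h1'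
  · exact (hasCommonNeighbor_of_pure_zero (by omega) he' he h1' h2' h0).symm
  · exact hasCommonNeighbor_of_pure_zero (by omega) he he' h1 h2 h0'
  · exact (hasCommonNeighbor_of_pure_one (by omega) he' he h0' h2' h1).symm
  · exact (hasCommonNeighbor_of_pure_two hn hne he' he h0' h1' h2).symm
  · omega

lemma exists_not_preconnected_of_isolated (hn : n ≠ 0) (he' : e'.degree = n) (h2' : e' 2 = 0)
    (hisolated : ∀ a : Fin 3 →₀ ℕ, a.degree = n → a 2 ≠ 0 →
      imbalance c a ∈ Set.uIcc 0 (imbalance c e') → a 0 = 0 ∧ a 1 = 0) :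
    ∃ d, ¬ (fiberGraph (genExponents c) n d).Preconnected := by
  have degree_eq : (triple 0 0 n).degree = n := by rw [degree_triple, zero_add, zero_add]
  have imbalance_eq : imbalance c (triple 0 0 n) = 0 := by
    rw [imbalance_triple, Nat.cast_zero, mul_zero, mul_zero, sub_zero]
  refine ⟨_, not_preconnected_of_isolated degree_eq he' ?_ fun a ha hle hshare ↦ ?_⟩
  · rintro rfl
    exact hn h2'
  · rw [weight_genExponents_le_sup_iff ha degree_eq he', imbalance_eq] at hle
    rw [not_disjoint_iff_exists_ne_zero, Fin.exists_fin_succ, Fin.exists_fin_two] at hshare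
    have h2 : a 2 ≠ 0 := by
      rcases hshare with ⟨h, -⟩ | ⟨h, -⟩ | ⟨-, h⟩
      exacts [absurd rfl h, absurd rfl h, h]
    obtain ⟨h0, h1⟩ := hisolated a ha h2 hle
    rw [degree_fin_three, h0, h1, zero_add, zero_add] at ha
    ext i
    fin_cases i
    exacts [h0, h1, ha]

lemma exists_not_preconnected_of_le (hn : 2 ≤ n) (hle : n ≤ c + 2) :
    ∃ d, ¬ (fiberGraph (genExponents c) n d).Preconnected := by
  refine exists_not_preconnected_of_isolated (e' := triple 1 (n - 1) 0) (by omega)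
    (by rw [degree_triple]; omega) rfl fun a hdeg hw hmem ↦ ?_
  rw [degree_fin_three] at hdeg
  rw [imbalance_triple, Set.mem_uIcc, imbalance] at hmem
  rcases Nat.eq_zero_or_pos (a 0) with hu | hu
  · rw [hu] at hmem
    omega
  · have mul_le : (c : ℤ) * 1 ≤ c * a 0 := by gcongr; omega
    have expand : (2 * c + 1 : ℤ) * a 0 = 2 * (c * a 0) + a 0 := by ring
    omega

lemma exists_not_preconnected_two_mul_add_three (c : ℕ) :
    ∃ d, ¬ (fiberGraph (genExponents c) (2 * c + 3) d).Preconnected := by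
  refine exists_not_preconnected_of_isolated (e' := triple 2 (2 * c + 1) 0) (by omega)
    (by rw [degree_triple]; omega) rfl fun a hdeg hw hmem ↦ ?_
  rw [degree_fin_three] at hdeg
  have balanced : 2 * (c * a 0) + a 0 = 2 * a 1 := by
    have imbalance_eq' : imbalance c (triple 2 (2 * c + 1) 0) = 0 := by
      rw [imbalance_triple]
      push_cast
      ring
    rw [imbalance_eq', Set.uIcc_self, Set.mem_singleton_iff, imbalance] at hmem
    zify
    linear_combination hmem
  rcases Nat.eq_zero_or_pos (a 0) with hu | hu
  · rw [hu] at balanced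
    omega
  · have mul_le : c * 2 ≤ c * a 0 := Nat.mul_le_mul_left c (by omega)
    omega

theorem reesRelStable_genExponents_iff (R : Type*) [CommRing R] [Nontrivial R] (hn : 2 ≤ n) :
    reesRelStable (monomialGens (genExponents c) R) n ↔ c + 3 ≤ n ∧ n ≠ 2 * c + 3 := by
  obtain ⟨n, rfl⟩ := Nat.exists_eq_add_of_le' (one_le_two.trans hn)
  rw [reesRelStable_succ_iff_preconnected]
  refine ⟨fun h ↦ ⟨?_, ?_⟩, fun ⟨hge, hne⟩ ↦ preconnected_of_hasCommonNeighbor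
    fun _ _ he he' hdisj ↦ hasCommonNeighbor_of_disjoint hge hne he he' hdisj⟩
  · by_contra! hlt
    obtain ⟨d, hd⟩ := exists_not_preconnected_of_le hn (Nat.le_of_lt_succ hlt)
    exact hd (h d)
  · intro heq
    obtain ⟨d, hd⟩ := exists_not_preconnected_two_mul_add_three c
    exact hd (heq ▸ h d)

theorem siftedDegrees_genExponents (R : Type*) [CommRing R] [Nontrivial R] (c : ℕ) :
    siftedDegrees (monomialGens (genExponents c) R) = insert (2 * c + 3) (Set.Icc 1 (c + 2)) := by
  ext n
  simp only [siftedDegrees, Set.mem_union, Set.mem_singleton_iff, Set.mem_ofPred_eq,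
    Set.mem_insert_iff, Set.mem_Icc]
  rw [and_congr_right fun hn : 2 ≤ n ↦ not_congr (reesRelStable_genExponents_iff R hn)]
  omega

end AlmostPurePowers

end ReesRelations

open ReesRelations in
theorem stmt_13_general {R : Type*} [CommRing R] [Nontrivial R] (p : ℕ) (hp : 3 ≤ p)
    (hodd : Odd p) :
    let a₁ : MvPolynomial (Fin 2) R := MvPolynomial.X 0
    let a₂ : MvPolynomial (Fin 2) R := MvPolynomial.X 1
    let x : Fin 3 → MvPolynomial (Fin 2) R := ![a₁ ^ p, a₂ ^ p, a₁ ^ 2 * a₂ ^ (p - 2)]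
    siftedDegrees x = Set.Icc 1 ((p - 1) / 2) ∪ {(p + 1) / 2, p} ∧
    siftedType x = (p + 3) / 2 ∧ relType x = p := by
  obtain ⟨c, rfl⟩ : ∃ c, p = 2 * c + 3 := by
    obtain ⟨j, rfl⟩ := hodd
    exact ⟨j - 1, by omega⟩
  intro a₁ a₂ x
  have hx : x = monomialGens (genExponents c) R := generators_eq_monomialGens R c
  have hsifted : siftedDegrees x = insert (2 * c + 3) (Set.Icc 1 (c + 2)) := by
    rw [hx, siftedDegrees_genExponents]
  refine ⟨?_, ?_, relType_eq_of_isGreatest ?_⟩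
  · rw [hsifted]
    ext n
    simp only [Set.mem_insert_iff, Set.mem_Icc, Set.mem_union, Set.mem_singleton_iff]
    omega
  · have notMem : 2 * c + 3 ∉ Set.Icc 1 (c + 2) := by
      rw [Set.mem_Icc]
      omega
    rw [siftedType, hsifted, Set.ncard_insert_of_notMem notMem, Set.ncard_Icc_nat]
    omega
  · rw [hsifted]
    refine ⟨Set.mem_insert _ _, fun n hn ↦ ?_⟩
    rw [Set.mem_insert_iff, Set.mem_Icc] at hn
    omega

/-- For `A = k[a₁,a₂]`, `p ≥ 5` odd, and `I = (a₁^p, a₂^p, a₁²a₂^{p-2})`: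
`SD(I) = {1,2,…,(p-1)/2} ∪ {(p+1)/2, p}`; hence `st(I) = (p+3)/2` and `rt(I) = p`. -/
theorem stmt_13 {k : Type*} [Field k] (p : ℕ) (hp : 5 ≤ p) (hodd : Odd p) :
    let a₁ : MvPolynomial (Fin 2) k := MvPolynomial.X 0
    let a₂ : MvPolynomial (Fin 2) k := MvPolynomial.X 1
    let x : Fin 3 → MvPolynomial (Fin 2) k := ![a₁ ^ p, a₂ ^ p, a₁ ^ 2 * a₂ ^ (p - 2)]
    siftedDegrees x = Set.Icc 1 ((p - 1) / 2) ∪ {(p + 1) / 2, p} ∧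
    siftedType x = (p + 3) / 2 ∧ relType x = p :=
  stmt_13_general p (by omega) hodd
end
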